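/- Let n ≥ 2 and let F(Y,X₁,…,Xₙ) ∈ ℤ[Y,X₁,…,Xₙ] be absolutely irreducible (irreducible in ℚ̄[Y,X₁,…,Xₙ]) with deg_Y F ≥ 2 and ‖F‖ ≥ 3. Suppose that every element of L_F := ℚ(X₁,…,Xₙ)[Y]/(F) that is algebraic over the subfield ℚ(X₂,…,Xₙ) already lies in ℚ(X₂,…,Xₙ). Then there exists a finite set E of primes with |E| ≤ C(n,deg F) · log‖F‖ / log log‖F‖, for a constant C(n,deg F) depending only on n and deg F, such that for every prime p ∉ E: #{(x₂,…,xₙ) ∈ 𝔽_p^{n−1} : F(Y,X₁,x₂,…,xₙ) is not irreducible as an element of 𝔽̄_p[Y,X₁]} ≤ C′(n,deg F) · p^{n−2}. -/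

import Mathlib

open Polynomial

noncomputable section

/-- The rational function field `ℚ(X₁,…,Xₙ)`. -/
abbrev RF (n : ℕ) := FractionRing (MvPolynomial (Fin n) ℚ)

/-- Base change a polynomial `F ∈ ℤ[Y,X₁,…,Xₙ]` (written as a polynomial in `Y`
with coefficients in `ℤ[X₁,…,Xₙ]`) to `ℚ[Y,X₁,…,Xₙ]`. -/
def toQ {n : ℕ} (F : Polynomial (MvPolynomial (Fin n) ℤ)) :
    Polynomial (MvPolynomial (Fin n) ℚ) :=
  F.map (MvPolynomial.map (Int.castRingHom ℚ))

/-- View a polynomial in `ℚ[X][Y]` as a polynomial in `ℚ(X)[Y]`. -/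
def toFracQ {n : ℕ} (F : Polynomial (MvPolynomial (Fin n) ℚ)) : Polynomial (RF n) :=
  F.map (algebraMap (MvPolynomial (Fin n) ℚ) (RF n))

/-- View a polynomial in `ℤ[X][Y]` as a polynomial in `ℚ(X)[Y]`. -/
def toFrac {n : ℕ} (F : Polynomial (MvPolynomial (Fin n) ℤ)) : Polynomial (RF n) :=
  toFracQ (toQ F)

/-- The degree of `F(Y,X)` in the variable `Xᵢ`. -/
def degX {n : ℕ} {R : Type*} [CommSemiring R]
    (F : Polynomial (MvPolynomial (Fin n) R)) (i : Fin n) : ℕ :=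
  F.support.sup fun k => (F.coeff k).degreeOf i

/-- The total degree of `F(Y,X₁,…,Xₙ)` as a polynomial in `n+1` variables. -/
def totalDeg {n : ℕ} {R : Type*} [CommSemiring R]
    (F : Polynomial (MvPolynomial (Fin n) R)) : ℕ :=
  F.support.sup fun k => k + (F.coeff k).totalDegree

/-- `‖g‖`: the maximum absolute value of a coefficient of `g ∈ ℤ[X₁,…,Xₙ]`. -/
def mvNorm {n : ℕ} (g : MvPolynomial (Fin n) ℤ) : ℕ :=
  g.support.sup fun m => (g.coeff m).natAbs

/-- `‖F‖`: the maximum absolute value of a coefficient of `F ∈ ℤ[Y,X₁,…,Xₙ]`. -/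
def polyNorm {n : ℕ} (F : Polynomial (MvPolynomial (Fin n) ℤ)) : ℕ :=
  F.support.sup fun k => mvNorm (F.coeff k)

/-- The counting function
`N(F,B) = #{x ∈ ℤⁿ ∩ [−B,B]ⁿ : ∃ y ∈ ℤ, F(y,x) = 0}`. -/
def NFB {n : ℕ} (F : Polynomial (MvPolynomial (Fin n) ℤ)) (B : ℝ) : ℕ :=
  Set.ncard {x : Fin n → ℤ | (∀ i, |(x i : ℝ)| ≤ B) ∧
    ∃ y : ℤ, Polynomial.eval y (F.map (MvPolynomial.eval x)) = 0}

/-- `F ∈ ℤ[Y,X₁,…,Xₙ]` is absolutely irreducible: irreducible over `ℚ̄`. -/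
def AbsIrred {n : ℕ} (F : Polynomial (MvPolynomial (Fin n) ℤ)) : Prop :=
  Irreducible (F.map (MvPolynomial.map (Int.castRingHom (AlgebraicClosure ℚ))))

/-- `G` has positive degree in `Y` and in each variable `Xᵢ`. -/
def AllPosDeg {n : ℕ} (G : Polynomial (MvPolynomial (Fin n) ℤ)) : Prop :=
  0 < G.natDegree ∧ ∀ i : Fin n, 0 < degX G i

/-- A field extension `M` of `ℚ(X₁,…,Xₙ)` is an `n`-genuine extension: every
`G ∈ ℤ[Y,X₁,…,Xₙ]` irreducible over `ℚ(X)` with `M ≅ ℚ(X)[Y]/(G)` has positive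
degree in each of `Y, X₁, …, Xₙ`. -/
def IsGenuineExt (n : ℕ) (M : Type*) [Field M] [Algebra (RF n) M] : Prop :=
  ∀ G : Polynomial (MvPolynomial (Fin n) ℤ), Irreducible (toFrac G) →
    Nonempty (AdjoinRoot (toFrac G) ≃ₐ[RF n] M) → AllPosDeg G

/-- A field extension `M` of `ℚ(X₁,…,Xₙ)` is strongly `n`-genuine: every
intermediate field strictly containing `ℚ(X)` is `n`-genuine. -/
def IsStronglyGenuineExt (n : ℕ) (M : Type*) [Field M] [Algebra (RF n) M] : Prop :=
  ∀ M' : IntermediateField (RF n) M, M' ≠ ⊥ → IsGenuineExt n M'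

/-- The extension `ℚ(X)[Y]/(Fq)` presented by `Fq ∈ ℚ[X][Y]` is `n`-genuine. -/
def GenuineExtOfQ {n : ℕ} (Fq : Polynomial (MvPolynomial (Fin n) ℚ)) : Prop :=
  ∀ G : Polynomial (MvPolynomial (Fin n) ℤ), Irreducible (toFrac G) →
    Nonempty (AdjoinRoot (toFrac G) ≃ₐ[RF n] AdjoinRoot (toFracQ Fq)) → AllPosDeg G

/-- The extension `ℚ(X)[Y]/(Fq)` presented by `Fq ∈ ℚ[X][Y]` is strongly
`n`-genuine: for any field `M` isomorphic over `ℚ(X)` to `ℚ(X)[Y]/(Fq)`, every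
intermediate field strictly containing `ℚ(X)` is `n`-genuine. -/
def StronglyGenuineExtOfQ {n : ℕ} (Fq : Polynomial (MvPolynomial (Fin n) ℚ)) : Prop :=
  ∀ (M : Type) [Field M] [Algebra (RF n) M],
    Nonempty (AdjoinRoot (toFracQ Fq) ≃ₐ[RF n] M) → IsStronglyGenuineExt n M

/-- An absolutely irreducible `F ∈ ℤ[Y,X₁,…,Xₙ]` is an `n`-genuine polynomial. -/
def IsGenuinePoly {n : ℕ} (F : Polynomial (MvPolynomial (Fin n) ℤ)) : Prop :=
  AbsIrred F ∧ GenuineExtOfQ (toQ F)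

/-- An absolutely irreducible `F ∈ ℤ[Y,X₁,…,Xₙ]` is a strongly `n`-genuine polynomial. -/
def IsStronglyGenuinePoly {n : ℕ} (F : Polynomial (MvPolynomial (Fin n) ℤ)) : Prop :=
  AbsIrred F ∧ StronglyGenuineExtOfQ (toQ F)

/-- The ring map `ℚ[X₁,…,Xₙ] → ℚ[X₁,…,Xₙ]` induced by the linear substitution
`Xᵢ ↦ Σⱼ σᵢⱼ Xⱼ`. -/
def lsubMv {n : ℕ} (σ : Matrix (Fin n) (Fin n) ℚ) :
    MvPolynomial (Fin n) ℚ →+* MvPolynomial (Fin n) ℚ :=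
  (MvPolynomial.aeval (R := ℚ)
    fun i => ∑ j, MvPolynomial.C (σ i j) * MvPolynomial.X j).toRingHom

/-- `F_σ(Y,X) := F(Y,σ(X))` for a linear change of variables `σ`. -/
def applyGL {n : ℕ} (σ : Matrix (Fin n) (Fin n) ℚ)
    (Fq : Polynomial (MvPolynomial (Fin n) ℚ)) : Polynomial (MvPolynomial (Fin n) ℚ) :=
  Fq.map (lsubMv σ)

/-- `F` is `(1,n)`-allowable: absolutely irreducible, monic in `Y`, and
`ℚ(X)[Y]/(F_σ)` is an `n`-genuine extension for every `σ ∈ GLₙ(ℚ)`. -/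
def IsAllowable {n : ℕ} (F : Polynomial (MvPolynomial (Fin n) ℤ)) : Prop :=
  AbsIrred F ∧ F.Monic ∧
    ∀ σ : Matrix (Fin n) (Fin n) ℚ, IsUnit σ.det → GenuineExtOfQ (applyGL σ (toQ F))

/-- `F` is strongly `(1,n)`-allowable: absolutely irreducible, monic in `Y`, and
`ℚ(X)[Y]/(F_σ)` is a strongly `n`-genuine extension for every `σ ∈ GLₙ(ℚ)`. -/
def IsStronglyAllowable {n : ℕ} (F : Polynomial (MvPolynomial (Fin n) ℤ)) : Prop :=
  AbsIrred F ∧ F.Monic ∧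
    ∀ σ : Matrix (Fin n) (Fin n) ℚ, IsUnit σ.det → StronglyGenuineExtOfQ (applyGL σ (toQ F))

/-- `F` has the form (1.2) with parameter `m`:
`F = Y^{md} + f₁(X) Y^{m(d-1)} + ⋯ + f_{d-1}(X) Y^m + f_d(X)` with `f_d ≠ 0`. -/
def HasForm (n m : ℕ) (F : Polynomial (MvPolynomial (Fin n) ℤ)) : Prop :=
  ∃ (d : ℕ) (f : ℕ → MvPolynomial (Fin n) ℤ), 1 ≤ d ∧ f d ≠ 0 ∧
    F = Polynomial.X ^ (m * d) +
      ∑ j ∈ Finset.Icc 1 d, Polynomial.C (f j) * Polynomial.X ^ (m * (d - j))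

/-- `P` has a linear factor in `Y`: `P = (Y − Q(X))·H̃(Y,X)`. -/
def HasLinearFactorY {n : ℕ} {R : Type*} [CommRing R]
    (P : Polynomial (MvPolynomial (Fin n) R)) : Prop :=
  ∃ (Q : MvPolynomial (Fin n) R) (H : Polynomial (MvPolynomial (Fin n) R)),
    P = (Polynomial.X - Polynomial.C Q) * H

/-- The canonical map `ℚ[X₁,…,Xₙ] → ℚ(X)[Y]/(F)`. -/
def structMap {n : ℕ} (F : Polynomial (MvPolynomial (Fin n) ℤ)) :
    MvPolynomial (Fin n) ℚ →+* AdjoinRoot (toFrac F) :=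
  (algebraMap (RF n) (AdjoinRoot (toFrac F))).comp
    (algebraMap (MvPolynomial (Fin n) ℚ) (RF n))

/-- `z ∈ ℚ(X)[Y]/(F)` lies in the subfield `ℚ((Xᵢ)_{i≠j})`: it can be written
as a quotient of two polynomials not involving `Xⱼ`. -/
def CoordMem {n : ℕ} (j : Fin n) (F : Polynomial (MvPolynomial (Fin n) ℤ))
    (z : AdjoinRoot (toFrac F)) : Prop :=
  ∃ a b : MvPolynomial (Fin n) ℚ,
    MvPolynomial.degreeOf j a = 0 ∧ MvPolynomial.degreeOf j b = 0 ∧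
    structMap F b ≠ 0 ∧ z * structMap F b = structMap F a

/-- `z ∈ ℚ(X)[Y]/(F)` is algebraic over the subfield `ℚ((Xᵢ)_{i≠j})`. -/
def AlgOverCoord {n : ℕ} (j : Fin n) (F : Polynomial (MvPolynomial (Fin n) ℤ))
    (z : AdjoinRoot (toFrac F)) : Prop :=
  ∃ P : Polynomial (AdjoinRoot (toFrac F)), P ≠ 0 ∧ (∀ k, CoordMem j F (P.coeff k)) ∧
    Polynomial.eval z P = 0

/-- Substitute `Xᵢ = xᵢ` for `i ∈ I` into `F`, over `ℚ̄`. -/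
def substSome {n : ℕ} (I : Finset (Fin n)) (x : Fin n → ℚ)
    (F : Polynomial (MvPolynomial (Fin n) ℤ)) :
    Polynomial (MvPolynomial (Fin n) (AlgebraicClosure ℚ)) :=
  (toQ F).map
    ((MvPolynomial.aeval (R := ℚ) fun i =>
      if i ∈ I then MvPolynomial.C (algebraMap ℚ (AlgebraicClosure ℚ) (x i))
      else MvPolynomial.X i).toRingHom)

/-- Substitute `Xᵢ = xᵢ` for all `i ≠ i₀` into `F`, over `ℚ̄`. -/
def substKeepFirst {n : ℕ} (i0 : Fin n) (x : {i : Fin n // i ≠ i0} → ℤ)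
    (F : Polynomial (MvPolynomial (Fin n) ℤ)) :
    Polynomial (MvPolynomial (Fin n) (AlgebraicClosure ℚ)) :=
  F.map
    ((MvPolynomial.aeval (R := ℤ) fun i =>
      if h : i = i0 then (MvPolynomial.X i : MvPolynomial (Fin n) (AlgebraicClosure ℚ))
      else MvPolynomial.C ((x ⟨i, h⟩ : ℤ) : AlgebraicClosure ℚ)).toRingHom)

/-- `‖L‖`: maximum absolute value of an entry of an integer matrix. -/
def matNorm {n : ℕ} (L : Matrix (Fin n) (Fin n) ℤ) : ℕ :=
  Finset.univ.sup fun p : Fin n × Fin n => (L p.1 p.2).natAbs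

/-- The standard additive character `e_p(a) = exp(2πi a/p)` on `ZMod p`. -/
def eZp (p : ℕ) (a : ZMod p) : ℂ :=
  Complex.exp (2 * Real.pi * Complex.I * (a.val : ℂ) / (p : ℂ))

theorem common_ext0 {Q K Ω : Type} [Field Q] [Field K] [Field Ω] [Algebra Q K] [Algebra Q Ω] :
    ∃ (M : Type) (_ : Field M) (i : K →+* M) (j : Ω →+* M),
      ∀ q : Q, i (algebraMap Q K q) = j (algebraMap Q Ω q) := by
  obtain ⟨m, hm⟩ := Ideal.exists_maximal (TensorProduct Q K Ω)
  let _ := Ideal.Quotient.field m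
  refine ⟨TensorProduct Q K Ω ⧸ m, inferInstance,
    (Ideal.Quotient.mk m).comp (Algebra.TensorProduct.includeLeftRingHom),
    (Ideal.Quotient.mk m).comp
      (Algebra.TensorProduct.includeRight (R := Q) (A := K) (B := Ω)).toRingHom, ?_⟩
  intro q
  simp only [RingHom.comp_apply]
  congr 1
  change TensorProduct.tmul Q (algebraMap Q K q) (1 : Ω) =
    TensorProduct.tmul Q (1 : K) (algebraMap Q Ω q)
  rw [Algebra.algebraMap_eq_smul_one, Algebra.algebraMap_eq_smul_one, TensorProduct.smul_tmul]

/-- Two homs to fields with the same kernel have a common extension. -/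
theorem common_ext {A K Ω : Type} [CommRing A] [Field K] [Field Ω] (f : A →+* K) (g : A →+* Ω)
    (h : RingHom.ker f = RingHom.ker g) :
    ∃ (M : Type) (_ : Field M) (i : K →+* M) (j : Ω →+* M), i.comp f = j.comp g := by
  let P := RingHom.ker f
  have : P.IsPrime := RingHom.ker_isPrime f
  let Q := FractionRing (A ⧸ P)
  have hf : Function.Injective (Ideal.Quotient.lift P f (fun a ha => ha)) :=
    Ideal.injective_lift_iff _ |>.2 rfl
  have hg : Function.Injective (Ideal.Quotient.lift P g (fun a ha => by
      have : a ∈ RingHom.ker g := h ▸ ha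
      exact this)) :=
    Ideal.injective_lift_iff _ |>.2 h.symm
  let _ : Algebra Q K := (IsFractionRing.lift hf).toAlgebra
  let _ : Algebra Q Ω := (IsFractionRing.lift hg).toAlgebra
  obtain ⟨M, _, i, j, hij⟩ := common_ext0 (Q := Q) (K := K) (Ω := Ω)
  refine ⟨M, inferInstance, i, j, ?_⟩
  ext a
  have h1 : f a = algebraMap Q K (algebraMap (A ⧸ P) Q (Ideal.Quotient.mk P a)) := by
    change _ = IsFractionRing.lift hf _
    rw [IsFractionRing.lift_algebraMap]; rfl
  have h2 : g a = algebraMap Q Ω (algebraMap (A ⧸ P) Q (Ideal.Quotient.mk P a)) := by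
    change _ = IsFractionRing.lift hg _
    rw [IsFractionRing.lift_algebraMap]; rfl
  simp only [RingHom.comp_apply]
  rw [h1, h2]
  exact hij _

theorem mem_vars_iff' {τ k : Type} [CommSemiring k] (p : MvPolynomial τ k) (i : τ) :
    i ∈ p.vars ↔ MvPolynomial.degreeOf i p ≠ 0 := by
  classical
  rw [MvPolynomial.degreeOf, MvPolynomial.vars, Multiset.mem_toFinset, ne_eq,
    Multiset.count_eq_zero, not_not]

theorem irred_rename {τ τ' k : Type} [Field k] (e : τ → τ') (he : Function.Injective e)
    (p : MvPolynomial τ k) (hp : Irreducible p) : Irreducible (MvPolynomial.rename e p) := by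
  classical
  have hp0 : MvPolynomial.rename e p ≠ 0 := by
    intro h0
    exact hp.ne_zero (MvPolynomial.rename_injective e he (by simpa using h0))
  have hvars : ∀ i, i ∉ Set.range e → MvPolynomial.degreeOf i (MvPolynomial.rename e p) = 0 := by
    intro i hi
    by_contra h
    have := (mem_vars_iff' _ _).2 h
    have := MvPolynomial.vars_rename e p this
    simp only [Finset.mem_image] at this
    obtain ⟨a, _, rfl⟩ := this
    exact hi ⟨a, rfl⟩
  have key : ∀ g h, MvPolynomial.rename e p = g * h → ∃ g0, g = MvPolynomial.rename e g0 := by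
    intro g h hgh
    have hg : g ≠ 0 := by rintro rfl; simp [hgh] at hp0
    have hh : h ≠ 0 := by rintro rfl; simp [hgh] at hp0
    obtain ⟨g0, hg0⟩ := MvPolynomial.exists_rename_eq_of_vars_subset_range g e he (by
      intro i hi
      by_contra hi'
      have h1 := hvars i hi'
      rw [hgh, MvPolynomial.degreeOf_mul_eq hg hh] at h1
      have h2 : MvPolynomial.degreeOf i g = 0 := by omega
      exact (mem_vars_iff' _ _).1 hi h2)
    exact ⟨g0, hg0.symm⟩
  constructor
  · intro hu
    apply hp.not_isUnit
    have := hu.map (MvPolynomial.killCompl he (R := k))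
    rwa [MvPolynomial.killCompl_rename_app] at this
  · intro g h hgh
    obtain ⟨g0, rfl⟩ := key g h hgh
    obtain ⟨h0, rfl⟩ := key h _ (hgh.trans (mul_comm _ _))
    rw [← map_mul] at hgh
    rcases hp.isUnit_or_isUnit (MvPolynomial.rename_injective e he hgh) with h | h
    · exact Or.inl (h.map _)
    · exact Or.inr (h.map _)

theorem zariski_descent {K Ω τ : Type} [Field K] [Field Ω] [Algebra K Ω]
    (f : MvPolynomial τ K) (g h : MvPolynomial τ Ω)
    (hf : MvPolynomial.map (algebraMap K Ω) f = g * h) (m1 m2 : τ →₀ ℕ)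
    (h1 : g.coeff m1 ≠ 0) (h2 : h.coeff m2 ≠ 0) :
    ∃ (K' : Type) (_ : Field K') (_ : Algebra K K') (_ : Module.Finite K K')
      (g' h' : MvPolynomial τ K'),
      MvPolynomial.map (algebraMap K K') f = g' * h' ∧ g'.coeff m1 ≠ 0 ∧ h'.coeff m2 ≠ 0 := by
  classical
  let S : Finset Ω := insert ((g.coeff m1 * h.coeff m2)⁻¹)
    (g.support.image g.coeff ∪ h.support.image h.coeff)
  let B := Algebra.adjoin K (S : Set Ω)
  have hS : ∀ x ∈ S, x ∈ B := fun x hx => Algebra.subset_adjoin hx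
  have lift : ∀ p : MvPolynomial τ Ω, (∀ m, p.coeff m ∈ B) →
      ∃ q : MvPolynomial τ B, MvPolynomial.map (algebraMap B Ω) q = p := by
    intro p hp
    refine ⟨∑ m ∈ p.support, MvPolynomial.monomial m ⟨p.coeff m, hp m⟩, ?_⟩
    rw [map_sum]
    conv_rhs => rw [p.as_sum]
    refine Finset.sum_congr rfl fun m _ => ?_
    rw [MvPolynomial.map_monomial]; rfl
  obtain ⟨gB, hgB⟩ := lift g (fun m => by
    by_cases hm : m ∈ g.support
    · apply hS; simp only [S, Finset.mem_insert, Finset.mem_union, Finset.mem_image]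
      exact Or.inr (Or.inl ⟨m, hm, rfl⟩)
    · rw [MvPolynomial.notMem_support_iff.1 hm]; exact B.zero_mem)
  obtain ⟨hB, hhB⟩ := lift h (fun m => by
    by_cases hm : m ∈ h.support
    · apply hS; simp only [S, Finset.mem_insert, Finset.mem_union, Finset.mem_image]
      exact Or.inr (Or.inr ⟨m, hm, rfl⟩)
    · rw [MvPolynomial.notMem_support_iff.1 hm]; exact B.zero_mem)
  let w : B := ⟨(g.coeff m1 * h.coeff m2)⁻¹, hS _ (Finset.mem_insert_self _ _)⟩
  have hinj : Function.Injective (algebraMap B Ω) := Subtype.val_injective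
  have hw : gB.coeff m1 * hB.coeff m2 * w = 1 := by
    apply hinj
    rw [map_mul, map_mul, map_one, ← MvPolynomial.coeff_map, ← MvPolynomial.coeff_map, hgB, hhB]
    exact mul_inv_cancel₀ (mul_ne_zero h1 h2)
  have hfB : MvPolynomial.map (algebraMap K B) f = gB * hB := by
    apply MvPolynomial.map_injective _ hinj
    rw [map_mul, hgB, hhB, ← hf, MvPolynomial.map_map, ← IsScalarTower.algebraMap_eq]
  have : Algebra.FiniteType K B := by
    rw [← Subalgebra.fg_iff_finiteType]
    exact ⟨S, rfl⟩
  obtain ⟨m, hm⟩ := Ideal.exists_maximal B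
  let _ := Ideal.Quotient.field m
  have hft : Algebra.FiniteType K (B ⧸ m) := inferInstance
  have hw' : Ideal.Quotient.mk m (gB.coeff m1) * Ideal.Quotient.mk m (hB.coeff m2) *
      Ideal.Quotient.mk m w = 1 := by
    rw [← map_mul, ← map_mul, hw, map_one]
  refine ⟨B ⧸ m, inferInstance, inferInstance, finite_of_finite_type_of_isJacobsonRing K (B ⧸ m),
    MvPolynomial.map (Ideal.Quotient.mk m) gB, MvPolynomial.map (Ideal.Quotient.mk m) hB, ?_, ?_, ?_⟩
  · rw [← map_mul, ← hfB, MvPolynomial.map_map]; rfl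
  · rw [MvPolynomial.coeff_map]; intro h0; rw [h0] at hw'; simp at hw'
  · rw [MvPolynomial.coeff_map]; intro h0; rw [h0] at hw'; simp at hw'

theorem lin_disj {K L K' : Type} [Field K] [Field L] [Field K'] [CharZero K] [Algebra K L]
    [Algebra K K'] [Module.Finite K K']
    (hcl : ∀ z : L, IsIntegral K z → z ∈ (algebraMap K L).range) :
    ∃ (M : Type) (_ : Field M) (j : L →+* M) (i : K' →+* M)
      (ι : Type) (_ : Fintype ι) (b : Module.Basis ι K K'),
      j.comp (algebraMap K L) = i.comp (algebraMap K K') ∧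
      ∀ c : ι → L, ∑ t, j (c t) * i (b t) = 0 → ∀ t, c t = 0 := by
  let pb := Field.powerBasisOfFiniteOfSeparable K K'
  have hInteg : IsIntegral K pb.gen := Algebra.IsIntegral.isIntegral _
  set m := minpoly K pb.gen with hm
  have hmirr : Irreducible m := minpoly.irreducible hInteg
  have hmm : m.Monic := minpoly.monic hInteg
  have hirr : Irreducible (m.map (algebraMap K L)) := by
    rw [Polynomial.irreducible_of_monic (hmm.map _)]
    swap
    · intro h1
      have : m.map (algebraMap K L) = (1 : K[X]).map (algebraMap K L) := by rw [h1]; simp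
      have := Polynomial.map_injective _ (algebraMap K L).injective this
      exact hmirr.not_isUnit (this ▸ isUnit_one)
    · intro p q hp hq hpq
      have lift : ∀ p : L[X], p.Monic → p ∣ m.map (algebraMap K L) →
          ∃ p0 : K[X], p0.map (algebraMap K L) = p ∧ p0.Monic := by
        intro p hp hd
        have h := integralClosure.mem_lifts_of_monic_of_dvd_map L hmm hp hd
        have h' : p ∈ Polynomial.lifts (algebraMap K L) := by
          rw [Polynomial.lifts_iff_coeff_lifts] at h ⊢
          intro n
          obtain ⟨x, hx⟩ := h n
          rw [← hx]
          exact hcl _ x.2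
        obtain ⟨q, hq, -, hq'⟩ := Polynomial.lifts_and_natDegree_eq_and_monic h' hp
        exact ⟨q, hq, hq'⟩
      obtain ⟨p0, rfl, hp0⟩ := lift p hp ⟨q, hpq.symm⟩
      obtain ⟨q0, rfl, hq0⟩ := lift q hq ⟨_, by rw [mul_comm]; exact hpq.symm⟩
      rw [← Polynomial.map_mul] at hpq
      have := Polynomial.map_injective _ (algebraMap K L).injective hpq
      rcases (Polynomial.irreducible_of_monic hmm hmirr.ne_one).1 hmirr p0 q0 hp0 hq0 this with h | h
      · left; simp [h]
      · right; simp [h]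
  have := Fact.mk hirr
  let M := AdjoinRoot (m.map (algebraMap K L))
  let pb' := AdjoinRoot.powerBasis' (hmm.map (algebraMap K L))
  let i : K' →ₐ[K] M := pb.lift (AdjoinRoot.root _) (by
    rw [← hm, Polynomial.aeval_def, IsScalarTower.algebraMap_eq K L M, ← Polynomial.eval₂_map]
    exact AdjoinRoot.eval₂_root _)
  refine ⟨M, inferInstance, algebraMap L M, i.toRingHom, Fin pb.dim, inferInstance, pb.basis, ?_, ?_⟩
  · ext x
    simp only [RingHom.comp_apply]
    rw [← IsScalarTower.algebraMap_apply]
    exact (i.commutes x).symm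
  · intro c hc
    have hdim : pb'.dim = pb.dim := by
      rw [← pb.natDegree_minpoly, ← hm]
      simp [pb']
    have hli := pb'.basis.linearIndependent
    have hli2 := hli.comp (Fin.cast hdim.symm) (Fin.cast_injective _)
    rw [Fintype.linearIndependent_iff] at hli2
    apply hli2 c
    rw [← hc]
    refine Finset.sum_congr rfl fun t _ => ?_
    rw [Algebra.smul_def]
    congr 1
    simp [pb', i]

theorem not_const_of {τ k : Type} [Field k] (g : MvPolynomial τ k) (hg0 : g ≠ 0)
    (hg : ¬ IsUnit g) : ∃ m, m ≠ 0 ∧ g.coeff m ≠ 0 := by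
  classical
  by_contra! hcon
  have : g = MvPolynomial.C (g.coeff 0) := by
    ext m
    rw [MvPolynomial.coeff_C]
    split_ifs with h
    · rw [h]
    · exact hcon m (Ne.symm h)
  apply hg
  rw [this]
  apply IsUnit.map
  rw [isUnit_iff_ne_zero]
  intro h0
  rw [h0, map_zero] at this
  exact hg0 this

theorem not_isUnit_of_coeff {τ k : Type} [Field k] (g : MvPolynomial τ k) (m : τ →₀ ℕ)
    (hm : m ≠ 0) (hg : g.coeff m ≠ 0) : ¬ IsUnit g := by
  classical
  intro hu
  obtain ⟨r, -, rfl⟩ := MvPolynomial.isUnit_iff_eq_C_of_isReduced.1 hu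
  rw [MvPolynomial.coeff_C, if_neg (Ne.symm hm)] at hg
  exact hg rfl

theorem basis_expand {K K' τ ι : Type} [Field K] [Field K'] [Algebra K K'] [Fintype ι]
    (b : Module.Basis ι K K') (g : MvPolynomial τ K') :
    ∃ G : ι → MvPolynomial τ K,
      g = ∑ t, MvPolynomial.C (b t) * MvPolynomial.map (algebraMap K K') (G t) := by
  induction g using MvPolynomial.induction_on' with
  | monomial m a =>
    refine ⟨fun t => MvPolynomial.monomial m (b.repr a t), ?_⟩
    simp only [MvPolynomial.map_monomial, MvPolynomial.C_mul_monomial]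
    rw [← map_sum]
    congr 1
    conv_lhs => rw [← b.sum_repr a]
    refine Finset.sum_congr rfl fun t _ => ?_
    rw [Algebra.smul_def, mul_comm]
  | add p q hp hq =>
    obtain ⟨P, hP⟩ := hp
    obtain ⟨Q, hQ⟩ := hq
    refine ⟨P + Q, ?_⟩
    conv_lhs => rw [hP, hQ]
    rw [← Finset.sum_add_distrib]
    refine Finset.sum_congr rfl fun t _ => ?_
    rw [Pi.add_apply, map_add, mul_add]

theorem geom_irr_of_kernel {K L τ : Type} [Field K] [Field L] [CharZero K] [Algebra K L]
    (hcl : ∀ z : L, IsIntegral K z → z ∈ (algebraMap K L).range)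
    (ev : MvPolynomial τ K →ₐ[K] L) (f : MvPolynomial τ K)
    (hker : ∀ G, ev G = 0 → f ∣ G) (hf0 : ev f = 0) (hnc : ∃ m, m ≠ 0 ∧ f.coeff m ≠ 0)
    (Ω : Type) [Field Ω] (i : K →+* Ω) : Irreducible (MvPolynomial.map i f) := by
  obtain ⟨m0, hm0, hm0'⟩ := hnc
  have hc0 : (MvPolynomial.map i f).coeff m0 ≠ 0 := by
    rw [MvPolynomial.coeff_map]
    simpa using hm0'
  refine ⟨not_isUnit_of_coeff _ m0 hm0 hc0, ?_⟩
  intro g h hgh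
  by_contra! hcon
  have hne : g * h ≠ 0 := by
    rw [← hgh]; intro h0; rw [h0] at hc0; simp at hc0
  obtain ⟨m1, hm1, hm1'⟩ := not_const_of g (left_ne_zero_of_mul hne) hcon.1
  obtain ⟨m2, hm2, hm2'⟩ := not_const_of h (right_ne_zero_of_mul hne) hcon.2
  let _ := i.toAlgebra
  obtain ⟨K', _, _, _, g', h', hf', hg', hh'⟩ :=
    zariski_descent (K := K) (Ω := Ω) f g h hgh m1 m2 hm1' hm2'
  obtain ⟨M, _, j, i', ι, _, b, hcomp, hli⟩ := lin_disj (K := K) (L := L) (K' := K') hcl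
  let ev' : MvPolynomial τ K' →+* M := MvPolynomial.eval₂Hom i' (fun t => j (ev (MvPolynomial.X t)))
  have hev : ∀ G : MvPolynomial τ K, ev' (MvPolynomial.map (algebraMap K K') G) = j (ev G) := by
    intro G
    have : ev'.comp (MvPolynomial.map (algebraMap K K')) = j.comp (ev : MvPolynomial τ K →+* L) := by
      apply MvPolynomial.ringHom_ext
      · intro r
        have := RingHom.congr_fun hcomp r
        simp only [RingHom.comp_apply] at this
        have h2 : ev (MvPolynomial.C r) = algebraMap K L r := ev.commutes r
        simp [ev', h2, this]
      · intro t
        simp [ev']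
    exact RingHom.congr_fun this G
  have hfK' : MvPolynomial.map (algebraMap K K') f ≠ 0 := by
    intro h0
    have : (MvPolynomial.map (algebraMap K K') f).coeff m0 ≠ 0 := by
      rw [MvPolynomial.coeff_map]
      simpa using hm0'
    rw [h0] at this; simp at this
  have key : ∀ g' h' : MvPolynomial τ K', MvPolynomial.map (algebraMap K K') f = g' * h' →
      ev' g' = 0 → IsUnit h' := by
    intro g' h' hgh' hg0
    obtain ⟨G, hG⟩ := basis_expand b g'
    have hz : ∀ t, ev (G t) = 0 := by
      apply hli
      rw [hG, map_sum] at hg0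
      rw [← hg0]
      refine Finset.sum_congr rfl fun t _ => ?_
      rw [map_mul, hev, mul_comm]
      simp [ev']
    have hd : MvPolynomial.map (algebraMap K K') f ∣ g' := by
      rw [hG]
      refine Finset.dvd_sum fun t _ => Dvd.dvd.mul_left (map_dvd _ (hker _ (hz t))) _
    obtain ⟨w, hw⟩ := hd
    rw [hw, mul_assoc] at hgh'
    have : w * h' = 1 := by
      apply mul_left_cancel₀ hfK'
      rw [← hgh', mul_one]
    exact IsUnit.of_mul_eq_one w (by rw [mul_comm]; exact this)
  have hprod : ev' g' * ev' h' = 0 := by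
    rw [← map_mul, ← hf', hev, hf0, map_zero]
  rcases mul_eq_zero.1 hprod with h0 | h0
  · exact not_isUnit_of_coeff _ m2 hm2 hh' (key g' h' hf' h0)
  · exact not_isUnit_of_coeff _ m1 hm1 hg' (key h' g' (by rw [mul_comm]; exact hf') h0)

/-- The polynomial with exponents in `s` and given coefficients. -/
noncomputable def polyOf {τ R : Type} [CommRing R] (s : Finset (τ →₀ ℕ)) (u : s → R) : MvPolynomial τ R :=
  ∑ m : s, MvPolynomial.monomial (m : τ →₀ ℕ) (u m)

theorem polyOf_coeff {τ R : Type} [CommRing R] (s : Finset (τ →₀ ℕ)) (u : s → R) (m : s) :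
    (polyOf s u).coeff (m : τ →₀ ℕ) = u m := by
  classical
  unfold polyOf
  rw [MvPolynomial.coeff_sum, Finset.sum_eq_single m]
  · simp
  · intro b _ hb
    rw [MvPolynomial.coeff_monomial, if_neg]
    intro h; exact hb (Subtype.ext h)
  · simp

theorem polyOf_map {τ R S : Type} [CommRing R] [CommRing S] (s : Finset (τ →₀ ℕ)) (u : s → R)
    (θ : R →+* S) : MvPolynomial.map θ (polyOf s u) = polyOf s (fun m => θ (u m)) := by
  unfold polyOf
  rw [map_sum]
  simp [MvPolynomial.map_monomial]

theorem polyOf_self {τ R : Type} [CommRing R] (s : Finset (τ →₀ ℕ)) (g : MvPolynomial τ R)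
    (hg : g.support ⊆ s) : polyOf s (fun m => g.coeff m) = g := by
  unfold polyOf
  rw [Finset.sum_coe_sort s (fun m => MvPolynomial.monomial m (g.coeff m))]
  conv_rhs => rw [g.as_sum]
  symm
  apply Finset.sum_subset hg
  intro m _ hm
  rw [MvPolynomial.notMem_support_iff.1 hm, map_zero]

theorem isConstructible_zeroLocus_finite {A : Type} [CommRing A] (s : Set A) (hs : s.Finite) :
    Topology.IsConstructible (PrimeSpectrum.zeroLocus s) := by
  rw [← Topology.isConstructible_compl]
  exact (PrimeSpectrum.isRetrocompact_zeroLocus_compl hs).isConstructible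
    (PrimeSpectrum.isClosed_zeroLocus s).isOpen_compl

theorem totalDegree_map_le' {τ R S : Type} [CommRing R] [CommRing S] (θ : R →+* S)
    (f : MvPolynomial τ R) : (MvPolynomial.map θ f).totalDegree ≤ f.totalDegree :=
  Finset.sup_mono (MvPolynomial.support_map_subset _ _)

theorem chev {A τ : Type} [CommRing A] [Finite τ] (f : MvPolynomial τ A) :
    ∃ T : Finset (PrimeSpectrum.BasicConstructibleSetData A),
      ∀ (k : Type) [Field k] (φ : A →+* k),
        (∀ (Ω : Type) [Field Ω] (i : k →+* Ω), Irreducible (MvPolynomial.map (i.comp φ) f)) ↔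
          ∃ C ∈ T, φ C.f ≠ 0 ∧ ∀ t, φ (C.g t) = 0 := by
  classical
  let s : Finset (τ →₀ ℕ) := (Finsupp.finite_of_degree_le (σ := τ) f.totalDegree).toFinset
  let B := MvPolynomial (s ⊕ s) A
  let U : MvPolynomial τ B := polyOf s (fun m => MvPolynomial.X (Sum.inl m))
  let V : MvPolynomial τ B := polyOf s (fun m => MvPolynomial.X (Sum.inr m))
  let fB : MvPolynomial τ B := MvPolynomial.map (MvPolynomial.C) f - U * V
  let I : Set B := (fun m => fB.coeff m) '' fB.support
  have hIfin : I.Finite := (Finset.finite_toSet _).image _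
  let J : Set A := (fun m => f.coeff m) '' {m | m ∈ f.support ∧ m ≠ 0}
  have hJfin : J.Finite := ((f.support.finite_toSet).subset (fun m hm => hm.1)).image _
  let W : s × s → Set (PrimeSpectrum B) := fun m => PrimeSpectrum.zeroLocus I ∩
    PrimeSpectrum.basicOpen (MvPolynomial.X (Sum.inl m.1) * MvPolynomial.X (Sum.inr m.2) : B)
  let N : Finset (s × s) := Finset.univ.filter (fun m => (m.1 : τ →₀ ℕ) ≠ 0 ∧ (m.2 : τ →₀ ℕ) ≠ 0)
  let Z : Set (PrimeSpectrum A) := (⋃ m ∈ N, PrimeSpectrum.comap (algebraMap A B) '' W m) ∪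
    PrimeSpectrum.zeroLocus J
  have hZ : Topology.IsConstructible Z := by
    apply Topology.IsConstructible.union
    · apply Topology.IsConstructible.biUnion N.finite_toSet
      intro m _
      apply PrimeSpectrum.isConstructible_comap_image
      · rw [RingHom.finitePresentation_algebraMap]; infer_instance
      · exact (isConstructible_zeroLocus_finite I hIfin).inter
          PrimeSpectrum.isConstructible_basicOpen
    · exact isConstructible_zeroLocus_finite J hJfin
  obtain ⟨T, hT⟩ := PrimeSpectrum.exists_constructibleSetData_iff.2 hZ.compl
  refine ⟨T, fun k _ φ => ?_⟩
  let x : PrimeSpectrum A := ⟨RingHom.ker φ, RingHom.ker_isPrime φ⟩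
  have hx : (∃ C ∈ T, φ C.f ≠ 0 ∧ ∀ t, φ (C.g t) = 0) ↔ x ∉ Z := by
    rw [← Set.mem_compl_iff, ← hT]
    simp only [PrimeSpectrum.ConstructibleSetData.toSet, Set.mem_iUnion,
      PrimeSpectrum.BasicConstructibleSetData.toSet, Set.mem_sdiff, PrimeSpectrum.mem_zeroLocus,
      Set.singleton_subset_iff, Set.range_subset_iff, SetLike.mem_coe, exists_prop]
    refine exists_congr fun C => and_congr_right fun _ => ?_
    rw [and_comm]
    rfl
  rw [hx]
  constructor
  · intro hirr hxZ
    rcases hxZ with hxZ | hxZ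
    · simp only [Set.mem_iUnion] at hxZ
      obtain ⟨m, hm, y, ⟨hyI, hyO⟩, hyx⟩ := hxZ
      simp only [N, Finset.mem_filter, Finset.mem_univ, true_and] at hm
      let g : B →+* y.asIdeal.ResidueField := algebraMap B _
      have hg : ∀ b, g b = 0 ↔ b ∈ y.asIdeal := fun b => Ideal.algebraMap_residueField_eq_zero
      have hker : RingHom.ker φ = RingHom.ker (g.comp (algebraMap A B)) := by
        have : RingHom.ker φ = (PrimeSpectrum.comap (algebraMap A B) y).asIdeal := by rw [hyx]
        rw [this]
        ext a
        rw [RingHom.mem_ker, RingHom.comp_apply, hg]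
        rfl
      obtain ⟨M, _, i, j, hij⟩ := common_ext φ (g.comp (algebraMap A B)) hker
      have hfac : MvPolynomial.map (i.comp φ) f =
          MvPolynomial.map (j.comp g) U * MvPolynomial.map (j.comp g) V := by
        have h0 : MvPolynomial.map g fB = 0 := by
          ext d
          rw [MvPolynomial.coeff_map, MvPolynomial.coeff_zero, hg]
          by_cases hd : d ∈ fB.support
          · exact hyI ⟨d, hd, rfl⟩
          · rw [MvPolynomial.notMem_support_iff.1 hd]; exact y.asIdeal.zero_mem
        have h1 : MvPolynomial.map (j.comp g) fB = 0 := by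
          rw [← MvPolynomial.map_map, h0, map_zero]
        rw [map_sub, sub_eq_zero, map_mul, MvPolynomial.map_map] at h1
        rw [hij, ← h1]
        rfl
      have hyO' : g (MvPolynomial.X (Sum.inl m.1) * MvPolynomial.X (Sum.inr m.2)) ≠ 0 := by
        rw [ne_eq, hg]; exact hyO
      rw [map_mul] at hyO'
      rcases (hirr M i).isUnit_or_isUnit hfac with h | h
      · refine not_isUnit_of_coeff _ (m.1 : τ →₀ ℕ) hm.1 ?_ h
        rw [MvPolynomial.coeff_map, polyOf_coeff, RingHom.comp_apply]
        simpa using left_ne_zero_of_mul hyO'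
      · refine not_isUnit_of_coeff _ (m.2 : τ →₀ ℕ) hm.2 ?_ h
        rw [MvPolynomial.coeff_map, polyOf_coeff, RingHom.comp_apply]
        simpa using right_ne_zero_of_mul hyO'
    · have h1 := hirr k (RingHom.id k)
      rw [RingHom.id_comp] at h1
      obtain ⟨m, hm, hm'⟩ := not_const_of _ h1.ne_zero h1.not_isUnit
      rw [MvPolynomial.coeff_map] at hm'
      apply hm'
      have : f.coeff m ∈ x.asIdeal := hxZ ⟨m, ⟨?_, hm⟩, rfl⟩
      · exact this
      · rw [MvPolynomial.mem_support_iff]; intro h0; rw [h0, map_zero] at hm'; exact hm' rfl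
  · intro hxZ Ω _ i
    set q := MvPolynomial.map (i.comp φ) f with hq
    have hnc : ∃ m, m ≠ 0 ∧ q.coeff m ≠ 0 := by
      by_contra! hcon
      apply hxZ
      right
      rintro _ ⟨m, ⟨_, hm⟩, rfl⟩
      have := hcon m hm
      rw [hq, MvPolynomial.coeff_map, RingHom.comp_apply] at this
      change φ (f.coeff m) = 0
      simpa using this
    obtain ⟨m0, hm0, hm0'⟩ := hnc
    have hq0 : q ≠ 0 := by intro h0; rw [h0] at hm0'; simp at hm0'
    refine ⟨not_isUnit_of_coeff _ m0 hm0 hm0', ?_⟩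
    intro g h hgh
    by_contra! hcon
    rw [hgh] at hq0
    have hg0 := left_ne_zero_of_mul hq0
    have hh0 := right_ne_zero_of_mul hq0
    obtain ⟨m1, hm1, hm1'⟩ := not_const_of g hg0 hcon.1
    obtain ⟨m2, hm2, hm2'⟩ := not_const_of h hh0 hcon.2
    have hdeg : g.totalDegree + h.totalDegree ≤ f.totalDegree := by
      rw [← MvPolynomial.totalDegree_mul_of_isDomain hg0 hh0, ← hgh]
      exact totalDegree_map_le' _ _
    have hsup : ∀ g : MvPolynomial τ Ω, g.totalDegree ≤ f.totalDegree → g.support ⊆ s := by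
      intro g hg m hm
      simp only [s, Set.Finite.mem_toFinset, Set.mem_ofPred_eq]
      exact (MvPolynomial.le_totalDegree hm).trans hg
    have hgs := hsup g (by omega)
    have hhs := hsup h (by omega)
    apply hxZ
    left
    simp only [Set.mem_iUnion]
    have hm1s := hgs (MvPolynomial.mem_support_iff.2 hm1')
    have hm2s := hhs (MvPolynomial.mem_support_iff.2 hm2')
    refine ⟨(⟨m1, hm1s⟩, ⟨m2, hm2s⟩), by simp [N, hm1, hm2], ?_⟩
    let θ : B →+* Ω := MvPolynomial.eval₂Hom (i.comp φ)
      (Sum.elim (fun m => g.coeff m) (fun m => h.coeff m))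
    have hθX : ∀ a, θ (MvPolynomial.X a) =
        Sum.elim (fun m : s => g.coeff m) (fun m : s => h.coeff m) a :=
      fun a => MvPolynomial.eval₂_X _ _ _
    have hU : MvPolynomial.map θ U = g := by
      rw [polyOf_map]
      simp only [hθX, Sum.elim_inl]
      exact polyOf_self s g hgs
    have hV : MvPolynomial.map θ V = h := by
      rw [polyOf_map]
      simp only [hθX, Sum.elim_inr]
      exact polyOf_self s h hhs
    have hθC : θ.comp MvPolynomial.C = i.comp φ := by
      ext a; exact MvPolynomial.eval₂_C _ _ _
    have hfB0 : MvPolynomial.map θ fB = 0 := by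
      rw [map_sub, map_mul, hU, hV, MvPolynomial.map_map, hθC, ← hgh, hq, sub_self]
    refine ⟨⟨RingHom.ker θ, RingHom.ker_isPrime θ⟩, ⟨?_, ?_⟩, ?_⟩
    · rintro _ ⟨m, _, rfl⟩
      change θ (fB.coeff m) = 0
      rw [← MvPolynomial.coeff_map, hfB0, MvPolynomial.coeff_zero]
    · change ¬ (θ _ = 0)
      rw [map_mul, hθX, hθX]
      simp [hm1', hm2']
    · apply PrimeSpectrum.ext
      ext a
      change θ (MvPolynomial.C a) = 0 ↔ φ a = 0
      have := RingHom.congr_fun hθC a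
      rw [RingHom.comp_apply] at this
      rw [this]
      simp

theorem eval_bound {ι : Type} (w : MvPolynomial ι ℤ) :
    ∃ M e : ℕ, ∀ (c : ι → ℤ) (H : ℕ), 1 ≤ H → (∀ i, (c i).natAbs ≤ H) →
      (MvPolynomial.eval c w).natAbs ≤ M * H ^ e := by
  induction w using MvPolynomial.induction_on with
  | C a => exact ⟨a.natAbs, 0, fun c H _ _ => by simp⟩
  | add p q hp hq =>
    obtain ⟨M, e, h⟩ := hp
    obtain ⟨M', e', h'⟩ := hq
    refine ⟨M + M', e + e', fun c H hH hc => ?_⟩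
    rw [map_add]
    have h1 := h c H hH hc
    have h2 := h' c H hH hc
    have h3 : H ^ e ≤ H ^ (e + e') := Nat.pow_le_pow_right hH (by omega)
    have h4 : H ^ e' ≤ H ^ (e + e') := Nat.pow_le_pow_right hH (by omega)
    calc _ ≤ _ := Int.natAbs_add_le _ _
      _ ≤ M * H ^ e + M' * H ^ e' := by omega
      _ ≤ M * H ^ (e + e') + M' * H ^ (e + e') := by gcongr
      _ = _ := by ring
  | mul_X p i hp =>
    obtain ⟨M, e, h⟩ := hp
    refine ⟨M, e + 1, fun c H hH hc => ?_⟩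
    rw [map_mul, MvPolynomial.eval_X, Int.natAbs_mul, pow_succ, ← mul_assoc]
    exact Nat.mul_le_mul (h c H hH hc) (hc i)

theorem omega_bound (M e : ℕ) :
    ∃ C : ℝ, 0 < C ∧ ∀ (q H : ℕ), q ≠ 0 → 3 ≤ H → q ≤ M * H ^ e →
      (q.primeFactors.card : ℝ) ≤ C * Real.log H / Real.log (Real.log H) := by
  let c0 : ℝ := Real.log (M + 1) + e
  have hlM : 0 ≤ Real.log ((M : ℝ) + 1) := Real.log_nonneg (by
    have : (0 : ℝ) ≤ M := Nat.cast_nonneg M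
    linarith)
  have hc0 : 0 ≤ c0 := by positivity
  refine ⟨2 + 2 * c0, by positivity, fun q H hq hH hqH => ?_⟩
  set l := Real.log H with hl
  have hl1 : 1 < l := by
    rw [hl, Real.lt_log_iff_exp_lt (by positivity)]
    have : Real.exp 1 < 3 := by have := Real.exp_one_lt_d9; linarith
    have h3 : (3 : ℝ) ≤ H := by exact_mod_cast hH
    linarith
  have hll : 0 < Real.log l := Real.log_pos hl1
  have hlq : Real.log q ≤ c0 * l := by
    have hq' : (q : ℝ) ≤ (M + 1) * (H : ℝ) ^ e := by
      have : q ≤ (M + 1) * H ^ e := hqH.trans (Nat.mul_le_mul_right _ (by omega))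
      exact_mod_cast this
    have hqpos : (0 : ℝ) < q := by positivity
    have hHpos : (0 : ℝ) < H := by positivity
    calc Real.log q ≤ Real.log ((M + 1) * (H : ℝ) ^ e) := Real.log_le_log hqpos hq'
      _ = Real.log (M + 1) + e * l := by
        rw [Real.log_mul (by positivity) (by positivity), Real.log_pow]
      _ ≤ Real.log (M + 1) * l + e * l := by nlinarith
      _ = c0 * l := by simp only [c0]; ring
  classical
  let S1 := q.primeFactors.filter (fun p : ℕ => (p : ℝ) ≤ Real.sqrt l)
  let S2 := q.primeFactors.filter (fun p : ℕ => ¬ (p : ℝ) ≤ Real.sqrt l)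
  have hcard : q.primeFactors.card = S1.card + S2.card :=
    (Finset.card_filter_add_card_filter_not (s := q.primeFactors) (fun p : ℕ => (p:ℝ) ≤ Real.sqrt l)).symm
  have h1 : (S1.card : ℝ) ≤ Real.sqrt l := by
    have hsub : S1 ⊆ Finset.Icc 1 ⌊Real.sqrt l⌋₊ := by
      intro p hp
      rw [Finset.mem_filter] at hp
      rw [Finset.mem_Icc]
      exact ⟨(Nat.prime_of_mem_primeFactors hp.1).one_le, Nat.le_floor hp.2⟩
    have := Finset.card_le_card hsub
    rw [Nat.card_Icc, Nat.add_sub_cancel] at this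
    calc (S1.card : ℝ) ≤ (⌊Real.sqrt l⌋₊ : ℝ) := by exact_mod_cast this
      _ ≤ _ := Nat.floor_le (Real.sqrt_nonneg _)
  have hsum : ∑ p ∈ q.primeFactors, Real.log (p : ℝ) ≤ Real.log q := by
    rw [← Real.log_prod (fun p hp => by
      have := (Nat.prime_of_mem_primeFactors hp).pos
      positivity)]
    have hle : ∏ p ∈ q.primeFactors, p ≤ q := Nat.le_of_dvd (by omega) (Nat.prod_primeFactors_dvd q)
    apply Real.log_le_log
    · apply Finset.prod_pos
      intro p hp
      have := (Nat.prime_of_mem_primeFactors hp).pos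
      positivity
    · rw [← Nat.cast_prod]; exact Nat.cast_le.2 hle
  have h2 : (S2.card : ℝ) * (Real.log l / 2) ≤ c0 * l := by
    calc (S2.card : ℝ) * (Real.log l / 2) = ∑ p ∈ S2, Real.log l / 2 := by
          rw [Finset.sum_const, nsmul_eq_mul]
      _ ≤ ∑ p ∈ S2, Real.log (p : ℝ) := by
          apply Finset.sum_le_sum
          intro p hp
          rw [Finset.mem_filter, not_le] at hp
          rw [← Real.log_sqrt (by linarith)]
          exact Real.log_le_log (Real.sqrt_pos.2 (by linarith)) hp.2.le
      _ ≤ ∑ p ∈ q.primeFactors, Real.log (p : ℝ) := by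
          apply Finset.sum_le_sum_of_subset_of_nonneg (Finset.filter_subset _ _)
          intro p hp _
          apply Real.log_nonneg
          exact_mod_cast (Nat.prime_of_mem_primeFactors hp).one_le
      _ ≤ c0 * l := hsum.trans hlq
  have h3 : Real.log l ≤ 2 * Real.sqrt l := by
    have : Real.log (Real.sqrt l) ≤ Real.sqrt l - 1 :=
      Real.log_le_sub_one_of_pos (Real.sqrt_pos.2 (by linarith))
    rw [Real.log_sqrt (by linarith)] at this
    linarith
  rw [le_div_iff₀ hll, hcard]
  push_cast
  have h4 : Real.sqrt l * Real.log l ≤ 2 * l := by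
    have := Real.mul_self_sqrt (show (0 : ℝ) ≤ l by linarith)
    nlinarith [Real.sqrt_nonneg l]
  nlinarith

theorem sz_bound {σ : Type} [Fintype σ] (hσ : 1 ≤ Fintype.card σ) (p : ℕ) [Fact p.Prime]
    (Q : MvPolynomial σ (ZMod p)) (hQ : Q ≠ 0) :
    (Set.ncard {x : σ → ZMod p | MvPolynomial.eval x Q = 0} : ℝ) ≤
      Q.totalDegree * (p : ℝ) ^ (Fintype.card σ - 1) := by
  classical
  set m := Fintype.card σ
  let ε : σ ≃ Fin m := Fintype.equivFin σ
  let Q' := MvPolynomial.rename ε Q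
  have hQ' : Q' ≠ 0 := by
    intro h
    exact hQ (MvPolynomial.rename_injective ε ε.injective (by simpa [Q'] using h))
  have hdeg : Q'.totalDegree ≤ Q.totalDegree := MvPolynomial.totalDegree_rename_le _ _
  have hsz := MvPolynomial.schwartz_zippel_totalDegree hQ' (Finset.univ : Finset (ZMod p))
  have hset : Set.ncard {x : σ → ZMod p | MvPolynomial.eval x Q = 0} ≤
      (Finset.filter (fun f => MvPolynomial.eval f Q' = 0)
        (Fintype.piFinset fun _ : Fin m => (Finset.univ : Finset (ZMod p)))).card := by
    rw [← Set.ncard_coe_finset]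
    refine Set.ncard_le_ncard_of_injOn (fun x => x ∘ ε.symm) ?_ ?_ (Finset.finite_toSet _)
    · intro x hx
      simp only [Finset.coe_filter, Fintype.mem_piFinset, Finset.mem_univ, implies_true, true_and]
      change MvPolynomial.eval _ Q' = 0
      simp only [Q', MvPolynomial.eval_rename]
      have : (x ∘ ε.symm) ∘ ε = x := by ext i; simp
      rw [this]
      exact hx
    · intro x _ y _ hxy
      ext i
      have := congrFun hxy (ε i)
      simpa using this
  have hp0 : (0 : ℝ) < p := by exact_mod_cast (Fact.out : p.Prime).pos
  rw [Finset.card_univ, ZMod.card] at hsz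
  generalize (Finset.filter (fun f => MvPolynomial.eval f Q' = 0)
        (Fintype.piFinset fun _ : Fin m => (Finset.univ : Finset (ZMod p)))).card = N at hsz hset
  have hp0' : (0 : ℚ≥0) < p := by exact_mod_cast (Fact.out : p.Prime).pos
  rw [div_le_div_iff₀ (by positivity) hp0'] at hsz
  have hszN : N * p ≤ Q'.totalDegree * p ^ m := by exact_mod_cast hsz
  have hpm : p ^ m = p ^ (m - 1) * p := by
    rw [← pow_succ, Nat.sub_add_cancel hσ]
  rw [hpm, ← mul_assoc] at hszN
  have h3 : N ≤ Q'.totalDegree * p ^ (m - 1) :=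
    Nat.le_of_mul_le_mul_right hszN (Fact.out : p.Prime).pos
  have h4 : Set.ncard {x : σ → ZMod p | MvPolynomial.eval x Q = 0} ≤ Q.totalDegree * p ^ (m - 1) :=
    hset.trans (h3.trans (Nat.mul_le_mul_right _ hdeg))
  exact_mod_cast h4

def Psi {n : ℕ} (j : Fin n) {R S : Type} [CommRing R] [CommRing S] (ρ : R →+* S)
    (y : {i : Fin n // i ≠ j} → S) :
    Polynomial (MvPolynomial (Fin n) R) →+* MvPolynomial Bool S :=
  Polynomial.eval₂RingHom (MvPolynomial.eval₂Hom (MvPolynomial.C.comp ρ)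
    (fun i => if h : i = j then MvPolynomial.X false else MvPolynomial.C (y ⟨i, h⟩)))
    (MvPolynomial.X true)

theorem Psi_map {n : ℕ} (j : Fin n) {R S T : Type} [CommRing R] [CommRing S] [CommRing T]
    (ρ : R →+* S) (y : {i : Fin n // i ≠ j} → S) (θ : S →+* T)
    (F : Polynomial (MvPolynomial (Fin n) R)) :
    MvPolynomial.map θ (Psi j ρ y F) = Psi j (θ.comp ρ) (fun i => θ (y i)) F := by
  have : (MvPolynomial.map θ).comp (Psi j ρ y) = Psi j (θ.comp ρ) (fun i => θ (y i)) := by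
    apply Polynomial.ringHom_ext'
    · apply MvPolynomial.ringHom_ext
      · intro r; simp [Psi]
      · intro i
        by_cases h : i = j <;> simp [Psi, h]
    · simp [Psi]
  exact RingHom.congr_fun this F

theorem Psi_comp {n : ℕ} (j : Fin n) {R S T : Type} [CommRing R] [CommRing S] [CommRing T]
    (η : R →+* S) (ρ : S →+* T) (y : {i : Fin n // i ≠ j} → T)
    (F : Polynomial (MvPolynomial (Fin n) R)) :
    Psi j ρ y (F.map (MvPolynomial.map η)) = Psi j (ρ.comp η) y F := by
  have : (Psi j ρ y).comp (Polynomial.mapRingHom (MvPolynomial.map η)) = Psi j (ρ.comp η) y := by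
    apply Polynomial.ringHom_ext'
    · apply MvPolynomial.ringHom_ext
      · intro r; simp [Psi]
      · intro i
        by_cases h : i = j <;> simp [Psi, h]
    · simp [Psi]
  exact RingHom.congr_fun this F

theorem irr_toQ {n : ℕ} (F : Polynomial (MvPolynomial (Fin n) ℤ)) (hF : AbsIrred F) :
    Irreducible (toQ F) := by
  let g : MvPolynomial (Fin n) ℚ →+* MvPolynomial (Fin n) (AlgebraicClosure ℚ) :=
    MvPolynomial.map (algebraMap ℚ (AlgebraicClosure ℚ))
  have hg : Function.Injective g :=
    MvPolynomial.map_injective _ (algebraMap ℚ (AlgebraicClosure ℚ)).injective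
  have hloc : IsLocalHom (Polynomial.mapRingHom g) := by
    constructor
    intro a ha
    rw [Polynomial.coe_mapRingHom, Polynomial.isUnit_iff] at ha
    obtain ⟨r, hr, hra⟩ := ha
    rw [MvPolynomial.isUnit_iff_eq_C_of_isReduced] at hr
    obtain ⟨c, hc, rfl⟩ := hr
    have ha0 : a = Polynomial.C (a.coeff 0) := by
      apply Polynomial.eq_C_of_natDegree_eq_zero
      rw [← Polynomial.natDegree_map_eq_of_injective hg, ← hra, Polynomial.natDegree_C]
    rw [ha0]
    apply Polynomial.isUnit_C.2
    have h1 : g (a.coeff 0) = MvPolynomial.C c := by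
      rw [← Polynomial.coeff_map, ← hra, Polynomial.coeff_C_zero]
    generalize a.coeff 0 = b at h1
    have hb : b = MvPolynomial.C (b.coeff 0) := by
      ext m
      by_cases hm : m = 0
      · subst hm; simp
      · have := congrArg (MvPolynomial.coeff m) h1
        rw [MvPolynomial.coeff_map, MvPolynomial.coeff_C, if_neg (Ne.symm hm)] at this
        rw [MvPolynomial.coeff_C, if_neg (Ne.symm hm)]
        simpa using this
    rw [hb]
    apply IsUnit.map
    rw [isUnit_iff_ne_zero]
    intro h0
    rw [hb, h0] at h1
    simp only [map_zero] at h1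
    have := (MvPolynomial.C_injective (Fin n) (AlgebraicClosure ℚ)) (h1.symm.trans (map_zero _).symm)
    exact hc.ne_zero this
  refine Irreducible.of_map (f := Polynomial.mapRingHom g) ?_
  have : Polynomial.mapRingHom g (toQ F) =
      F.map (MvPolynomial.map (Int.castRingHom (AlgebraicClosure ℚ))) := by
    rw [Polynomial.coe_mapRingHom, toQ, Polynomial.map_map]
    congr 1
    apply MvPolynomial.ringHom_ext
    · intro r; simp
    · intro i; simp [g]
  rw [this]
  exact hF

theorem irr_toFrac {n : ℕ} (F : Polynomial (MvPolynomial (Fin n) ℤ)) (hF : AbsIrred F)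
    (hd : 2 ≤ F.natDegree) : (toQ F).IsPrimitive ∧ Irreducible (toFrac F) := by
  have h1 := irr_toQ F hF
  have h2 : (toQ F).IsPrimitive := h1.isPrimitive (by
    rw [toQ, Polynomial.natDegree_map_eq_of_injective
      (MvPolynomial.map_injective _ (RingHom.injective_int _))]
    omega)
  refine ⟨h2, ?_⟩
  classical
  obtain ⟨_⟩ : Nonempty (NormalizedGCDMonoid (MvPolynomial (Fin n) ℚ)) := inferInstance
  rw [toFrac, toFracQ]
  exact (h2.irreducible_iff_irreducible_map_fraction_map).1 h1

theorem structMap_injective {n : ℕ} (F : Polynomial (MvPolynomial (Fin n) ℤ))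
    [Fact (Irreducible (toFrac F))] : Function.Injective (structMap F) := by
  rw [structMap, RingHom.coe_comp]
  exact (RingHom.injective _).comp (IsFractionRing.injective _ _)

theorem degOf_mul_zero {n : ℕ} (j : Fin n) (a b : MvPolynomial (Fin n) ℚ)
    (ha : MvPolynomial.degreeOf j a = 0) (hb : MvPolynomial.degreeOf j b = 0) :
    MvPolynomial.degreeOf j (a * b) = 0 := by
  have := MvPolynomial.degreeOf_mul_le j a b
  omega

theorem degOf_add_zero {n : ℕ} (j : Fin n) (a b : MvPolynomial (Fin n) ℚ)
    (ha : MvPolynomial.degreeOf j a = 0) (hb : MvPolynomial.degreeOf j b = 0) :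
    MvPolynomial.degreeOf j (a + b) = 0 := by
  have := MvPolynomial.degreeOf_add_le j a b
  simp only [ha, hb, max_self] at this
  omega

theorem coordMem_of {n : ℕ} (j : Fin n) (F : Polynomial (MvPolynomial (Fin n) ℤ))
    [Fact (Irreducible (toFrac F))] (a : MvPolynomial (Fin n) ℚ)
    (ha : MvPolynomial.degreeOf j a = 0) : CoordMem j F (structMap F a) :=
  ⟨a, 1, ha, by rw [← MvPolynomial.C_1, MvPolynomial.degreeOf_C], by rw [map_one]; exact one_ne_zero, by rw [map_one, mul_one]⟩

def coordField {n : ℕ} (j : Fin n) (F : Polynomial (MvPolynomial (Fin n) ℤ))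
    [Fact (Irreducible (toFrac F))] : Subfield (AdjoinRoot (toFrac F)) where
  carrier := {z | CoordMem j F z}
  mul_mem' := by
    rintro z w ⟨a, b, ha, hb, h0, h⟩ ⟨a', b', ha', hb', h0', h'⟩
    refine ⟨a * a', b * b', degOf_mul_zero j _ _ ha ha', degOf_mul_zero j _ _ hb hb', ?_, ?_⟩
    · rw [map_mul]; exact mul_ne_zero h0 h0'
    · rw [map_mul, map_mul, ← h, ← h']; ring
  one_mem' := by
    have := coordMem_of j F 1 (by rw [← MvPolynomial.C_1, MvPolynomial.degreeOf_C])
    rwa [map_one] at this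
  add_mem' := by
    rintro z w ⟨a, b, ha, hb, h0, h⟩ ⟨a', b', ha', hb', h0', h'⟩
    refine ⟨a * b' + a' * b, b * b', degOf_add_zero j _ _ (degOf_mul_zero j _ _ ha hb')
      (degOf_mul_zero j _ _ ha' hb), degOf_mul_zero j _ _ hb hb', ?_, ?_⟩
    · rw [map_mul]; exact mul_ne_zero h0 h0'
    · rw [map_add, map_mul, map_mul, map_mul, ← h, ← h']; ring
  zero_mem' := by
    have := coordMem_of j F 0 (by rw [← MvPolynomial.C_0, MvPolynomial.degreeOf_C])
    rwa [map_zero] at this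
  neg_mem' := by
    rintro z ⟨a, b, ha, hb, h0, h⟩
    refine ⟨-a, b, by rw [MvPolynomial.degreeOf_neg]; exact ha, hb, h0, ?_⟩
    rw [map_neg, ← h]; ring
  inv_mem' := by
    rintro z ⟨a, b, ha, hb, h0, h⟩
    by_cases hz : z = 0
    · subst hz
      rw [inv_zero]
      have := coordMem_of j F 0 (by rw [← MvPolynomial.C_0, MvPolynomial.degreeOf_C])
      rwa [map_zero] at this
    · refine ⟨b, a, hb, ha, ?_, ?_⟩
      · rw [← h]; exact mul_ne_zero hz h0
      · rw [← h, inv_mul_cancel_left₀ hz]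

theorem coordField_closed {n : ℕ} (j : Fin n) (F : Polynomial (MvPolynomial (Fin n) ℤ))
    [Fact (Irreducible (toFrac F))]
    (hcl : ∀ z : AdjoinRoot (toFrac F), AlgOverCoord j F z → CoordMem j F z)
    (z : AdjoinRoot (toFrac F)) (hz : IsIntegral (coordField j F) z) :
    z ∈ (algebraMap (coordField j F) (AdjoinRoot (toFrac F))).range := by
  have : CoordMem j F z := by
    apply hcl
    obtain ⟨P, hP, hPz⟩ := hz
    refine ⟨P.map (algebraMap (coordField j F) (AdjoinRoot (toFrac F))), ?_, ?_, ?_⟩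
    · exact (hP.map _).ne_zero
    · intro k
      rw [Polynomial.coeff_map]
      exact (P.coeff k).2
    · rw [Polynomial.eval_map]
      exact hPz
  exact ⟨⟨z, this⟩, rfl⟩

/-- the coordinates as elements of the coordinate field -/
def coordX {n : ℕ} (j : Fin n) (F : Polynomial (MvPolynomial (Fin n) ℤ))
    [Fact (Irreducible (toFrac F))] (i : {i : Fin n // i ≠ j}) : coordField j F :=
  ⟨structMap F (MvPolynomial.X i.1), coordMem_of j F _ (by
    classical
    rw [MvPolynomial.degreeOf_X, if_neg (Ne.symm i.2)])⟩

theorem eval_coordX {n : ℕ} (j : Fin n) (F : Polynomial (MvPolynomial (Fin n) ℤ))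
    [Fact (Irreducible (toFrac F))] (q : MvPolynomial {i : Fin n // i ≠ j} ℤ) :
    ((MvPolynomial.eval₂Hom (Int.castRingHom (coordField j F)) (coordX j F) q : coordField j F) :
      AdjoinRoot (toFrac F)) = structMap F (MvPolynomial.map (Int.castRingHom ℚ)
        (MvPolynomial.rename Subtype.val q)) := by
  have : (coordField j F).subtype.comp (MvPolynomial.eval₂Hom (Int.castRingHom (coordField j F))
      (coordX j F)) = ((structMap F).comp (MvPolynomial.map (Int.castRingHom ℚ))).comp
        (MvPolynomial.rename Subtype.val).toRingHom := by
    apply MvPolynomial.ringHom_ext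
    · intro r; simp
    · intro i; simp [coordX]
  exact RingHom.congr_fun this q

theorem coordX_inj {n : ℕ} (j : Fin n) (F : Polynomial (MvPolynomial (Fin n) ℤ))
    [Fact (Irreducible (toFrac F))] :
    Function.Injective (MvPolynomial.eval₂Hom (Int.castRingHom (coordField j F)) (coordX j F)) := by
  intro a b h
  have h' := congrArg (Subtype.val) h
  rw [eval_coordX, eval_coordX] at h'
  exact MvPolynomial.rename_injective _ Subtype.val_injective
    (MvPolynomial.map_injective _ (RingHom.injective_int _) (structMap_injective F h'))

theorem charZero_adj {n : ℕ} (F : Polynomial (MvPolynomial (Fin n) ℤ))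
    [Fact (Irreducible (toFrac F))] : CharZero (AdjoinRoot (toFrac F)) :=
  charZero_of_injective_ringHom (structMap_injective F)

theorem charZero_coord {n : ℕ} (j : Fin n) (F : Polynomial (MvPolynomial (Fin n) ℤ))
    [Fact (Irreducible (toFrac F))] : CharZero (coordField j F) := by
  have := charZero_adj F
  constructor
  intro a b h
  have h' := congrArg (Subtype.val) h
  exact Nat.cast_injective (R := AdjoinRoot (toFrac F)) (by simpa using h')

theorem Psi_C_const {n : ℕ} (j : Fin n) (F : Polynomial (MvPolynomial (Fin n) ℤ))
    [Fact (Irreducible (toFrac F))] (ρ : ℚ →+* coordField j F) (a : MvPolynomial (Fin n) ℚ)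
    (ha : MvPolynomial.degreeOf j a = 0) :
    Psi j ρ (coordX j F) (Polynomial.C a) =
      MvPolynomial.C (⟨structMap F a, coordMem_of j F a ha⟩ : coordField j F) := by
  classical
  obtain ⟨q, rfl⟩ := MvPolynomial.exists_rename_eq_of_vars_subset_range a
    (Subtype.val : {i : Fin n // i ≠ j} → Fin n) Subtype.val_injective (by
      intro i hi
      rw [Subtype.range_coe_subtype]
      rintro rfl
      exact (mem_vars_iff' a _).1 hi ha)
  have h1 : ((Psi j ρ (coordX j F)).comp Polynomial.C).comp
      (MvPolynomial.rename (Subtype.val : {i : Fin n // i ≠ j} → Fin n)).toRingHom =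
      MvPolynomial.C.comp (MvPolynomial.eval₂Hom ρ (coordX j F)) := by
    apply MvPolynomial.ringHom_ext
    · intro r; simp [Psi]
    · intro i
      simp [Psi, i.2]
  have h2 : (coordField j F).subtype.comp (MvPolynomial.eval₂Hom ρ (coordX j F)) =
      (structMap F).comp
        (MvPolynomial.rename (Subtype.val : {i : Fin n // i ≠ j} → Fin n)).toRingHom := by
    apply MvPolynomial.ringHom_ext'
    · exact RingHom.ext_rat _ _
    · intro i
      simp [coordX]
  have h3 : MvPolynomial.eval₂Hom ρ (coordX j F) q =
      ⟨structMap F (MvPolynomial.rename Subtype.val q), coordMem_of j F _ ha⟩ :=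
    Subtype.ext (RingHom.congr_fun h2 q)
  rw [← h3]
  exact RingHom.congr_fun h1 q

theorem clear_den {n : ℕ} (j : Fin n) (F : Polynomial (MvPolynomial (Fin n) ℤ))
    [Fact (Irreducible (toFrac F))] (ρ : ℚ →+* coordField j F)
    (G : MvPolynomial Bool (coordField j F)) :
    ∃ (H B : Polynomial (MvPolynomial (Fin n) ℚ)) (c : coordField j F), c ≠ 0 ∧
      Psi j ρ (coordX j F) B = MvPolynomial.C c ∧
      Psi j ρ (coordX j F) H = MvPolynomial.C c * G := by
  induction G using MvPolynomial.induction_on with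
  | C a =>
    obtain ⟨z, a', b', ha, hb, h0, h⟩ := a
    refine ⟨Polynomial.C a', Polynomial.C b', ⟨structMap F b', coordMem_of j F b' hb⟩, ?_,
      Psi_C_const j F ρ b' hb, ?_⟩
    · intro h'
      exact h0 (congrArg Subtype.val h')
    · rw [Psi_C_const j F ρ a' ha, ← MvPolynomial.C_mul]
      congr 1
      apply Subtype.ext
      change structMap F a' = structMap F b' * z
      rw [mul_comm]
      exact h.symm
  | add p q hp hq =>
    obtain ⟨H, B, c, hc, h1, h2⟩ := hp
    obtain ⟨H', B', c', hc', h1', h2'⟩ := hq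
    refine ⟨H * B' + H' * B, B * B', c * c', mul_ne_zero hc hc', ?_, ?_⟩
    · rw [map_mul, h1, h1', MvPolynomial.C_mul]
    · rw [map_add, map_mul, map_mul, h1, h1', h2, h2', MvPolynomial.C_mul]; ring
  | mul_X p i hp =>
    obtain ⟨H, B, c, hc, h1, h2⟩ := hp
    cases i with
    | false =>
      refine ⟨H * Polynomial.C (MvPolynomial.X j), B, c, hc, h1, ?_⟩
      rw [map_mul, h2, mul_assoc]
      congr 1
      simp [Psi]
    | true =>
      refine ⟨H * Polynomial.X, B, c, hc, h1, ?_⟩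
      rw [map_mul, h2, mul_assoc]
      congr 1
      simp [Psi]

theorem generic_irr {n : ℕ} (j : Fin n) (F : Polynomial (MvPolynomial (Fin n) ℤ))
    (hF : AbsIrred F) (hd : 2 ≤ F.natDegree)
    (hcl : ∀ z : AdjoinRoot (toFrac F), AlgOverCoord j F z → CoordMem j F z) :
    ∃ (K : Type) (_ : Field K) (y : {i : Fin n // i ≠ j} → K),
      Function.Injective (MvPolynomial.eval₂Hom (Int.castRingHom K) y) ∧
      ∀ (Ω : Type) [Field Ω] (i : K →+* Ω),
        Irreducible (MvPolynomial.map i (Psi j (Int.castRingHom K) y F)) := by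
  obtain ⟨hprim, hirr⟩ := irr_toFrac F hF hd
  have : Fact (Irreducible (toFrac F)) := ⟨hirr⟩
  have := charZero_adj F
  have := charZero_coord j F
  refine ⟨coordField j F, inferInstance, coordX j F, coordX_inj j F, ?_⟩
  intro Ω _ i
  let ρ : ℚ →+* coordField j F := algebraMap ℚ (coordField j F)
  let φ := Psi j ρ (coordX j F)
  have hφF : Psi j (Int.castRingHom _) (coordX j F) F = φ (toQ F) := by
    have h1 : Psi j ρ (coordX j F) (F.map (MvPolynomial.map (Int.castRingHom ℚ))) = _ :=
      Psi_comp j (Int.castRingHom ℚ) ρ (coordX j F) F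
    have h2 : ρ.comp (Int.castRingHom ℚ) = Int.castRingHom (coordField j F) :=
      RingHom.ext_int _ _
    rw [h2] at h1
    exact h1.symm
  rw [hφF]
  let L := AdjoinRoot (toFrac F)
  let ev : MvPolynomial Bool (coordField j F) →ₐ[coordField j F] L :=
    MvPolynomial.aeval (fun b => if b = true then AdjoinRoot.root (toFrac F)
      else structMap F (MvPolynomial.X j))
  let π : Polynomial (MvPolynomial (Fin n) ℚ) →+* L :=
    (AdjoinRoot.mk (toFrac F)).comp (Polynomial.mapRingHom (algebraMap _ (RF n)))
  have hev : ev.toRingHom.comp φ = π := by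
    apply Polynomial.ringHom_ext'
    · apply MvPolynomial.ringHom_ext'
      · exact RingHom.ext_rat _ _
      · intro i
        by_cases h : i = j
        · subst h
          simp [φ, Psi, ev, π, structMap]
        · simp [φ, Psi, ev, π, structMap, h]
          rfl
    · simp [φ, Psi, ev, π]
  have hπ : ∀ H, π H = 0 → toQ F ∣ H := by
    intro H hH
    have h1 : toFrac F ∣ H.map (algebraMap _ (RF n)) := AdjoinRoot.mk_eq_zero.1 hH
    obtain ⟨_⟩ : Nonempty (NormalizedGCDMonoid (MvPolynomial (Fin n) ℚ)) := inferInstance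
    exact hprim.dvd_of_fraction_map_dvd_fraction_map h1
  refine geom_irr_of_kernel (coordField_closed j F hcl) ev (φ (toQ F)) ?_ ?_ ?_ Ω i
  · intro G hG
    obtain ⟨H, B, c, hc, hB, hH⟩ := clear_den j F ρ G
    have h1 : π H = 0 := by
      rw [← hev]
      change ev (φ H) = 0
      have : φ H = MvPolynomial.C c * G := hH
      rw [this, map_mul, hG, mul_zero]
    have h2 : φ (toQ F) ∣ MvPolynomial.C c * G := by
      have := map_dvd φ (hπ H h1)
      have h3 : φ H = MvPolynomial.C c * G := hH
      rwa [h3] at this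
    have hu : IsUnit (MvPolynomial.C c : MvPolynomial Bool (coordField j F)) :=
      (isUnit_iff_ne_zero.2 hc).map MvPolynomial.C
    exact (hu.dvd_mul_left).1 h2
  · change ev.toRingHom.comp φ (toQ F) = 0
    rw [hev]
    change AdjoinRoot.mk (toFrac F) (toFrac F) = 0
    exact AdjoinRoot.mk_self
  · by_contra! hcon
    let ψ : MvPolynomial Bool (coordField j F) →+* Polynomial L :=
      MvPolynomial.eval₂Hom (Polynomial.C.comp (coordField j F).subtype)
        (fun b => if b = true then Polynomial.X else Polynomial.C (structMap F (MvPolynomial.X j)))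
    have hψ : ψ.comp φ = Polynomial.mapRingHom (structMap F) := by
      apply Polynomial.ringHom_ext'
      · apply MvPolynomial.ringHom_ext'
        · exact RingHom.ext_rat _ _
        · intro i
          by_cases h : i = j
          · subst h
            simp [φ, Psi, ψ]
          · simp [φ, Psi, ψ, h, coordX]
      · simp [φ, Psi, ψ]
    have hc : φ (toQ F) = MvPolynomial.C ((φ (toQ F)).coeff 0) := by
      ext1 m
      by_cases hm : m = 0
      · subst hm; simp
      · rw [hcon m hm, MvPolynomial.coeff_C, if_neg (Ne.symm hm)]
    have h1 : ψ (φ (toQ F)) = (toQ F).map (structMap F) := RingHom.congr_fun hψ _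
    have h2 : ((toQ F).map (structMap F)).natDegree = F.natDegree := by
      rw [Polynomial.natDegree_map_eq_of_injective (structMap_injective F), toQ,
        Polynomial.natDegree_map_eq_of_injective
          (MvPolynomial.map_injective _ (RingHom.injective_int _))]
    rw [hc] at h1
    rw [← h1] at h2
    simp [ψ] at h2
    omega


theorem final_conv {n : ℕ} (j : Fin n) {k Ω : Type} [Field k] [Field Ω] [Algebra k Ω]
    (x : {i : Fin n // i ≠ j} → k) (P : Polynomial (MvPolynomial (Fin n) k))
    (h : Irreducible (Psi j (algebraMap k Ω) (fun i => algebraMap k Ω (x i)) P)) :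
    Irreducible (P.map ((MvPolynomial.aeval (R := k) fun i =>
      if h : i = j then (MvPolynomial.X i : MvPolynomial (Fin n) Ω)
      else MvPolynomial.C (algebraMap k Ω (x ⟨i, h⟩))).toRingHom)) := by
  let e : Bool → Option (Fin n) := fun b => if b = true then none else some j
  have he : Function.Injective e := by
    intro a b
    cases a <;> cases b <;> simp [e]
  have h1 := irred_rename e he _ h
  have h2 := (MulEquiv.irreducible_iff (MvPolynomial.optionEquivLeft Ω (Fin n))).2 h1
  have h3 : ((MvPolynomial.optionEquivLeft Ω (Fin n)).toAlgHom.toRingHom.comp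
      (MvPolynomial.rename e).toRingHom).comp
      (Psi j (algebraMap k Ω) (fun i => algebraMap k Ω (x i))) =
      Polynomial.mapRingHom ((MvPolynomial.aeval (R := k) fun i =>
      if h : i = j then (MvPolynomial.X i : MvPolynomial (Fin n) Ω)
      else MvPolynomial.C (algebraMap k Ω (x ⟨i, h⟩))).toRingHom) := by
    apply Polynomial.ringHom_ext'
    · apply MvPolynomial.ringHom_ext
      · intro r
        simp [Psi, MvPolynomial.optionEquivLeft_C]
      · intro i
        by_cases h : i = j
        · subst h
          simp [Psi, e, MvPolynomial.optionEquivLeft_X_some]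
        · simp [Psi, e, h, MvPolynomial.optionEquivLeft_C]
    · simp [Psi, e, MvPolynomial.optionEquivLeft_X_none]
  have h4 := RingHom.congr_fun h3 P
  rw [Polynomial.coe_mapRingHom] at h4
  rw [← h4]
  exact h2

def boxS (n D : ℕ) : Finset (Fin n →₀ ℕ) :=
  Finset.Iic (Finsupp.equivFunOnFinite.symm fun _ => D)

def Fgen (n D : ℕ) : Polynomial (MvPolynomial (Fin n) (MvPolynomial (ℕ × (Fin n →₀ ℕ)) ℤ)) :=
  ∑ k ∈ Finset.range (D + 1), Polynomial.C (∑ m ∈ boxS n D,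
    MvPolynomial.monomial m (MvPolynomial.X (k, m))) * Polynomial.X ^ k

def cF {n : ℕ} (F : Polynomial (MvPolynomial (Fin n) ℤ)) (t : ℕ × (Fin n →₀ ℕ)) : ℤ :=
  (F.coeff t.1).coeff t.2

theorem cF_le {n : ℕ} (F : Polynomial (MvPolynomial (Fin n) ℤ)) (t : ℕ × (Fin n →₀ ℕ)) :
    (cF F t).natAbs ≤ polyNorm F := by
  by_cases h : cF F t = 0
  · rw [h]; simp
  · have h1 : t.2 ∈ (F.coeff t.1).support := MvPolynomial.mem_support_iff.2 h
    have h2 : t.1 ∈ F.support := by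
      rw [Polynomial.mem_support_iff]
      intro h0
      rw [h0] at h1
      simp at h1
    calc (cF F t).natAbs ≤ mvNorm (F.coeff t.1) :=
          Finset.le_sup (f := fun m => ((F.coeff t.1).coeff m).natAbs) h1
      _ ≤ polyNorm F := Finset.le_sup (f := fun k => mvNorm (F.coeff k)) h2

theorem Fgen_map {n D : ℕ} (F : Polynomial (MvPolynomial (Fin n) ℤ)) (hF : totalDeg F ≤ D) :
    (Fgen n D).map (MvPolynomial.map (MvPolynomial.eval (cF F))) = F := by
  have hk : ∀ k ∈ F.support, k + (F.coeff k).totalDegree ≤ D := fun k hk =>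
    (Finset.le_sup (f := fun k => k + (F.coeff k).totalDegree) hk).trans hF
  have hcoef : ∀ k, ∑ m ∈ boxS n D, MvPolynomial.monomial m ((F.coeff k).coeff m) = F.coeff k := by
    intro k
    conv_rhs => rw [MvPolynomial.as_sum (F.coeff k)]
    symm
    apply Finset.sum_subset
    · intro m hm
      rw [boxS, Finset.mem_Iic]
      intro i
      have hks : k ∈ F.support := by
        rw [Polynomial.mem_support_iff]
        intro h0
        rw [h0] at hm
        simp at hm
      have h1 := hk k hks
      have h2 := MvPolynomial.monomial_le_degreeOf i hm
      have h3 := MvPolynomial.degreeOf_le_totalDegree (F.coeff k) i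
      simp only [Finsupp.equivFunOnFinite_symm_apply_apply]
      omega
    · intro m _ hm
      rw [MvPolynomial.notMem_support_iff.1 hm, map_zero]
  have hdeg : F.natDegree < D + 1 := by
    by_cases h0 : F = 0
    · subst h0; simp
    · have := hk F.natDegree (Polynomial.natDegree_mem_support_of_nonzero h0)
      omega
  conv_rhs => rw [F.as_sum_range_C_mul_X_pow' hdeg]
  rw [Fgen, Polynomial.map_sum]
  apply Finset.sum_congr rfl
  intro k _
  rw [Polynomial.map_mul, Polynomial.map_pow, Polynomial.map_X, Polynomial.map_C, map_sum]
  congr 2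
  conv_rhs => rw [← hcoef k]
  apply Finset.sum_congr rfl
  intro m _
  rw [MvPolynomial.map_monomial, MvPolynomial.eval_X, cF]

theorem univ_chev (n : ℕ) (j : Fin n) (D : ℕ) :
    ∃ T : Finset (PrimeSpectrum.BasicConstructibleSetData
        (MvPolynomial {i : Fin n // i ≠ j} (MvPolynomial (ℕ × (Fin n →₀ ℕ)) ℤ))),
      ∀ F : Polynomial (MvPolynomial (Fin n) ℤ), totalDeg F ≤ D →
      ∀ (k : Type) [Field k] (y : {i : Fin n // i ≠ j} → k),
        (∀ (Ω : Type) [Field Ω] (i : k →+* Ω),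
          Irreducible (MvPolynomial.map i (Psi j (Int.castRingHom k) y F))) ↔
        ∃ C ∈ T, MvPolynomial.eval₂Hom (Int.castRingHom k) y
            (MvPolynomial.map (MvPolynomial.eval (cF F)) C.f) ≠ 0 ∧
          ∀ t, MvPolynomial.eval₂Hom (Int.castRingHom k) y
            (MvPolynomial.map (MvPolynomial.eval (cF F)) (C.g t)) = 0 := by
  obtain ⟨T, hT⟩ := chev (Psi j (MvPolynomial.C :
    MvPolynomial (ℕ × (Fin n →₀ ℕ)) ℤ →+*
      MvPolynomial {i : Fin n // i ≠ j} (MvPolynomial (ℕ × (Fin n →₀ ℕ)) ℤ))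
    MvPolynomial.X (Fgen n D))
  refine ⟨T, fun F hF k _ y => ?_⟩
  let φ : MvPolynomial {i : Fin n // i ≠ j} (MvPolynomial (ℕ × (Fin n →₀ ℕ)) ℤ) →+* k :=
    (MvPolynomial.eval₂Hom (Int.castRingHom k) y).comp
      (MvPolynomial.map (MvPolynomial.eval (cF F)))
  have h1 : MvPolynomial.map φ (Psi j MvPolynomial.C MvPolynomial.X (Fgen n D)) =
      Psi j (Int.castRingHom k) y F := by
    conv_rhs => rw [← Fgen_map F hF]
    rw [Psi_map, Psi_comp]
    congr 1
    · congr 1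
      · apply RingHom.ext
        intro a
        change MvPolynomial.eval₂Hom (Int.castRingHom k) y
          (MvPolynomial.map (MvPolynomial.eval (cF F)) (MvPolynomial.C a)) = _
        rw [MvPolynomial.map_C, MvPolynomial.eval₂Hom_C]
        rfl
      · ext i
        simp [φ]
  have h2 := hT k φ
  rw [← h1]
  simp only [MvPolynomial.map_map]
  exact h2

theorem w_bound {ι : Type} (w : MvPolynomial ι ℤ) :
    ∃ C : ℝ, 0 < C ∧ ∀ (c : ι → ℤ) (H : ℕ), 3 ≤ H → (∀ i, (c i).natAbs ≤ H) →
      MvPolynomial.eval c w ≠ 0 →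
      ((MvPolynomial.eval c w).natAbs.primeFactors.card : ℝ) ≤
        C * (Real.log H / Real.log (Real.log H)) := by
  obtain ⟨M, e, h⟩ := eval_bound w
  obtain ⟨C, hC, h'⟩ := omega_bound M e
  refine ⟨C, hC, fun c H hH hc h0 => ?_⟩
  rw [← mul_div_assoc]
  exact h' _ H (Int.natAbs_ne_zero.2 h0) hH (h c H (by omega) hc)

theorem loglog_nonneg (H : ℕ) (hH : 3 ≤ H) : 0 ≤ Real.log H / Real.log (Real.log H) := by
  have hl1 : 1 < Real.log H := by
    rw [Real.lt_log_iff_exp_lt (by positivity)]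
    have : Real.exp 1 < 3 := by have := Real.exp_one_lt_d9; linarith
    have h3 : (3 : ℝ) ≤ H := by exact_mod_cast hH
    linarith
  have := Real.log_pos hl1
  positivity

theorem statement19 (n : ℕ) (hn : 2 ≤ n) (D : ℕ) :
    ∃ C C' : ℝ, 0 < C ∧ 0 < C' ∧
      ∀ F : Polynomial (MvPolynomial (Fin n) ℤ),
        AbsIrred F → 2 ≤ F.natDegree → 3 ≤ polyNorm F → totalDeg F = D →
        (∀ z : AdjoinRoot (toFrac F),
          AlgOverCoord (⟨0, by omega⟩ : Fin n) F z →
            CoordMem (⟨0, by omega⟩ : Fin n) F z) →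
        ∃ E : Finset ℕ, (∀ p ∈ E, p.Prime) ∧
          (E.card : ℝ) ≤
            C * Real.log (polyNorm F : ℝ) / Real.log (Real.log (polyNorm F : ℝ)) ∧
          ∀ p : ℕ, ∀ hp : p.Prime, p ∉ E →
            haveI : Fact p.Prime := ⟨hp⟩;
            (Set.ncard {x : {i : Fin n // i ≠ (⟨0, by omega⟩ : Fin n)} → ZMod p |
                ¬ Irreducible
                  ((F.map (MvPolynomial.map (Int.castRingHom (ZMod p)))).map
                    ((MvPolynomial.aeval (R := ZMod p) fun i =>
                      if h : i = (⟨0, by omega⟩ : Fin n) then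
                        (MvPolynomial.X i :
                          MvPolynomial (Fin n) (AlgebraicClosure (ZMod p)))
                      else
                        MvPolynomial.C
                          (algebraMap (ZMod p) (AlgebraicClosure (ZMod p))
                            (x ⟨i, h⟩))).toRingHom))} : ℝ)
              ≤ C' * (p : ℝ) ^ (n - 2) := by
  classical
  set j : Fin n := ⟨0, by omega⟩ with hj
  obtain ⟨T, hT⟩ := univ_chev n j D
  choose Cw hCw0 hCw using fun w : MvPolynomial (ℕ × (Fin n →₀ ℕ)) ℤ => w_bound w
  refine ⟨1 + ∑ c ∈ T, ∑ m ∈ c.f.support, Cw (c.f.coeff m),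
    1 + ∑ c ∈ T, (c.f.totalDegree : ℝ), ?_, ?_, ?_⟩
  · have : 0 ≤ ∑ c ∈ T, ∑ m ∈ c.f.support, Cw (c.f.coeff m) :=
      Finset.sum_nonneg fun c _ => Finset.sum_nonneg fun m _ => (hCw0 _).le
    linarith
  · have : 0 ≤ ∑ c ∈ T, (c.f.totalDegree : ℝ) := Finset.sum_nonneg fun c _ => Nat.cast_nonneg _
    linarith
  intro F hF hd hnorm hD hcl
  obtain ⟨K, _, y, hinj, hirr⟩ := generic_irr j F hF hd hcl
  obtain ⟨c, hcT, hcf, hcg⟩ := (hT F hD.le K y).1 hirr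
  set Q : MvPolynomial {i : Fin n // i ≠ j} ℤ :=
    MvPolynomial.map (MvPolynomial.eval (cF F)) c.f with hQ
  have hQ0 : Q ≠ 0 := by
    intro h0
    rw [h0, map_zero] at hcf
    exact hcf rfl
  have hg0 : ∀ t, MvPolynomial.map (MvPolynomial.eval (cF F)) (c.g t) = 0 := by
    intro t
    apply hinj
    rw [hcg t, map_zero]
  obtain ⟨m, hm⟩ := MvPolynomial.ne_zero_iff.1 hQ0
  have hmc : MvPolynomial.eval (cF F) (c.f.coeff m) ≠ 0 := by
    rwa [hQ, MvPolynomial.coeff_map] at hm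
  have hms : m ∈ c.f.support := by
    rw [MvPolynomial.mem_support_iff]
    intro h0
    rw [h0, map_zero] at hmc
    exact hmc rfl
  refine ⟨(MvPolynomial.eval (cF F) (c.f.coeff m)).natAbs.primeFactors,
    fun p hp => Nat.prime_of_mem_primeFactors hp, ?_, ?_⟩
  · have h1 := hCw (c.f.coeff m) (cF F) (polyNorm F) hnorm (cF_le F) hmc
    have h2 : Cw (c.f.coeff m) ≤ 1 + ∑ c ∈ T, ∑ m ∈ c.f.support, Cw (c.f.coeff m) := by
      have h3 : Cw (c.f.coeff m) ≤ ∑ m ∈ c.f.support, Cw (c.f.coeff m) :=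
        Finset.single_le_sum (f := fun m => Cw (c.f.coeff m)) (fun m _ => (hCw0 _).le) hms
      have h4 : ∑ m ∈ c.f.support, Cw (c.f.coeff m) ≤
          ∑ c ∈ T, ∑ m ∈ c.f.support, Cw (c.f.coeff m) :=
        Finset.single_le_sum (f := fun c : PrimeSpectrum.BasicConstructibleSetData
            (MvPolynomial {i : Fin n // i ≠ j} (MvPolynomial (ℕ × (Fin n →₀ ℕ)) ℤ)) =>
          ∑ m ∈ c.f.support, Cw (c.f.coeff m))
          (fun c _ => Finset.sum_nonneg fun m _ => (hCw0 _).le) hcT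
      linarith
    rw [mul_div_assoc]
    exact h1.trans (mul_le_mul_of_nonneg_right h2 (loglog_nonneg _ hnorm))
  · intro p hp hpE
    have : Fact p.Prime := ⟨hp⟩
    let Qp : MvPolynomial {i : Fin n // i ≠ j} (ZMod p) :=
      MvPolynomial.map (Int.castRingHom (ZMod p)) Q
    have hQp : Qp ≠ 0 := by
      intro h0
      have h1 := congrArg (MvPolynomial.coeff m) h0
      rw [MvPolynomial.coeff_map, hQ, MvPolynomial.coeff_map, MvPolynomial.coeff_zero,
        eq_intCast, ZMod.intCast_zmod_eq_zero_iff_dvd] at h1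
      apply hpE
      rw [Nat.mem_primeFactors]
      exact ⟨hp, Int.natCast_dvd.1 h1, Int.natAbs_ne_zero.2 hmc⟩
    have hcard : Fintype.card {i : Fin n // i ≠ j} = n - 1 := by
      simp [Fintype.card_subtype_compl]
    have hsz := sz_bound (by rw [hcard]; omega) p Qp hQp
    rw [hcard] at hsz
    have hdegQ : (Qp.totalDegree : ℝ) ≤ 1 + ∑ c ∈ T, (c.f.totalDegree : ℝ) := by
      have h1 : Qp.totalDegree ≤ c.f.totalDegree :=
        (totalDegree_map_le' _ _).trans (totalDegree_map_le' _ _)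
      have h2 : (c.f.totalDegree : ℝ) ≤ ∑ c ∈ T, (c.f.totalDegree : ℝ) :=
        Finset.single_le_sum (f := fun c : PrimeSpectrum.BasicConstructibleSetData
            (MvPolynomial {i : Fin n // i ≠ j} (MvPolynomial (ℕ × (Fin n →₀ ℕ)) ℤ)) =>
          (c.f.totalDegree : ℝ)) (fun c _ => Nat.cast_nonneg _) hcT
      have h3 : (Qp.totalDegree : ℝ) ≤ c.f.totalDegree := by exact_mod_cast h1
      linarith
    have hfin : (Set.ncard {x : {i : Fin n // i ≠ j} → ZMod p | MvPolynomial.eval x Qp = 0} : ℝ) ≤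
        (1 + ∑ c ∈ T, (c.f.totalDegree : ℝ)) * (p : ℝ) ^ (n - 2) := by
      refine hsz.trans ?_
      have : n - 1 - 1 = n - 2 := by omega
      rw [this]
      exact mul_le_mul_of_nonneg_right hdegQ (by positivity)
    refine le_trans (Nat.cast_le.2 (Set.ncard_le_ncard ?_ (Set.toFinite _))) hfin
    intro x hx
    by_contra hne
    apply hx
    have hev : ∀ q : MvPolynomial {i : Fin n // i ≠ j} ℤ,
        MvPolynomial.eval₂Hom (Int.castRingHom (ZMod p)) x q =
        MvPolynomial.eval x (MvPolynomial.map (Int.castRingHom (ZMod p)) q) := by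
      intro q
      rw [MvPolynomial.eval_map]
      rfl
    have h1 := (hT F hD.le (ZMod p) x).2 ⟨c, hcT, by rw [hev]; exact hne, fun t => by
      rw [hg0 t, map_zero]⟩ (AlgebraicClosure (ZMod p)) (algebraMap _ _)
    apply final_conv j x
    rw [Psi_comp]
    rw [Psi_map] at h1
    exact h1
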